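/- If H(Z|X,Y) = 0 (the closed-system assumption: Z is a deterministic function of (X,Y) on the support of p), then the synergistic information is nonnegative: Syn(X,Y→Z) = I(X;Z|Y) − Un(X→Z|Y) ≥ 0. -/

import Mathlib

open Finset

/-- Shannon entropy of a distribution on a finite type (natural-log base). -/
noncomputable def ent {α : Type*} [Fintype α] (p : α → ℝ) : ℝ :=
  ∑ a, Real.negMulLog (p a)

/-- Mutual information between the two coordinates of a joint distribution. -/
noncomputable def mutInfo {α β : Type*} [Fintype α] [Fintype β] (q : α × β → ℝ) : ℝ :=
  ent (fun a => ∑ b, q (a, b)) + ent (fun b => ∑ a, q (a, b)) - ent q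

/-- Conditional entropy of the first coordinate given the second: H(A|B) = H(A,B) - H(B). -/
noncomputable def condEntFst {α β : Type*} [Fintype α] [Fintype β] (q : α × β → ℝ) : ℝ :=
  ent q - ent (fun b => ∑ a, q (a, b))

/-- Conditional entropy of the second coordinate given the first: H(B|A) = H(A,B) - H(A). -/
noncomputable def condEntSnd {α β : Type*} [Fintype α] [Fintype β] (q : α × β → ℝ) : ℝ :=
  ent q - ent (fun a => ∑ b, q (a, b))

section PID

variable {X Y Z : Type*} [Fintype X] [Fintype Y] [Fintype Z]

/-- 𝒳-marginal of a joint distribution on 𝒳×𝒴×𝒵. -/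
noncomputable def pX (p : X × Y × Z → ℝ) (x : X) : ℝ := ∑ y, ∑ z, p (x, y, z)

/-- 𝒴-marginal. -/
noncomputable def pY (p : X × Y × Z → ℝ) (y : Y) : ℝ := ∑ x, ∑ z, p (x, y, z)

/-- 𝒵-marginal. -/
noncomputable def pZ (p : X × Y × Z → ℝ) (z : Z) : ℝ := ∑ x, ∑ y, p (x, y, z)

/-- The do-operation: q(x,y,z) = p(x,y,z)·c(z)/p_Z(z) if p_Z(z) > 0, else 0. -/
noncomputable def doOp (p : X × Y × Z → ℝ) (c : Z → ℝ) : X × Y × Z → ℝ :=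
  fun t => if 0 < pZ p t.2.2 then p t * c t.2.2 / pZ p t.2.2 else 0

/-- (𝒳,𝒵)-marginal. -/
noncomputable def margXZ (p : X × Y × Z → ℝ) : X × Z → ℝ := fun t => ∑ y, p (t.1, y, t.2)

/-- (𝒴,𝒵)-marginal. -/
noncomputable def margYZ (p : X × Y × Z → ℝ) : Y × Z → ℝ := fun t => ∑ x, p (x, t.1, t.2)

/-- (𝒳,𝒴)-marginal. -/
noncomputable def margXY (p : X × Y × Z → ℝ) : X × Y → ℝ := fun t => ∑ z, p (t.1, t.2, z)

/-- c_y(z) = Pr(Z = z | Y = y). -/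
noncomputable def cy (p : X × Y × Z → ℝ) (y : Y) : Z → ℝ :=
  fun z => (∑ x, p (x, y, z)) / pY p y

/-- The distribution of (A_y, B_y, C_y) = do(p | c_y). -/
noncomputable def doy (p : X × Y × Z → ℝ) (y : Y) : X × Y × Z → ℝ := doOp p (cy p y)

/-- c^x(z) = Pr(Z = z | X = x). -/
noncomputable def cx (p : X × Y × Z → ℝ) (x : X) : Z → ℝ :=
  fun z => (∑ y, p (x, y, z)) / pX p x

/-- The distribution of (A^x, B^x, C^x) = do(p | c^x). -/
noncomputable def dox (p : X × Y × Z → ℝ) (x : X) : X × Y × Z → ℝ := doOp p (cx p x)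

/-- Unique information Un(X→Z|Y) = Σ_{y : p_Y(y)>0} p_Y(y)·I(A_y;C_y). -/
noncomputable def Un (p : X × Y × Z → ℝ) : ℝ :=
  ∑ y ∈ Finset.univ.filter (fun y => 0 < pY p y), pY p y * mutInfo (margXZ (doy p y))

/-- Unique information Un(Y→Z|X) = Σ_{x : p_X(x)>0} p_X(x)·I(B^x;C^x). -/
noncomputable def UnYX (p : X × Y × Z → ℝ) : ℝ :=
  ∑ x ∈ Finset.univ.filter (fun x => 0 < pX p x), pX p x * mutInfo (margYZ (dox p x))

/-- Redundant information Red(X,Y→Z) = I(X;Z) − Un(X→Z|Y). -/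
noncomputable def Red (p : X × Y × Z → ℝ) : ℝ := mutInfo (margXZ p) - Un p

/-- Conditional mutual information I(X;Z|Y) = H(X,Y) + H(Y,Z) − H(Y) − H(X,Y,Z). -/
noncomputable def condMI (p : X × Y × Z → ℝ) : ℝ :=
  ent (margXY p) + ent (margYZ p) - ent (pY p) - ent p

/-- Synergistic information Syn(X,Y→Z) = I(X;Z|Y) − Un(X→Z|Y). -/
noncomputable def Syn (p : X × Y × Z → ℝ) : ℝ := condMI p - Un p

end PID

/-!
Since `C_y` is distributed as `c_y`, each term `I(A_y; C_y)` is at most `H(c_y) = H(Z | Y = y)`, and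
averaging over `y` gives `Un(X → Z | Y) ≤ H(Z | Y)`. As `I(X; Z | Y) = H(Z | Y) - H(Z | X, Y)`, the
synergistic information is at least `-H(Z | X, Y)`, which vanishes for a closed system.
-/

section Entropy

variable {α β : Type*}

lemma negMulLog_sum_le (s : Finset α) {f : α → ℝ} (hf : ∀ a ∈ s, 0 ≤ f a) :
    Real.negMulLog (∑ a ∈ s, f a) ≤ ∑ a ∈ s, Real.negMulLog (f a) := by
  have hsplit : Real.negMulLog (∑ a ∈ s, f a) = ∑ a ∈ s, -f a * Real.log (∑ b ∈ s, f b) := by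
    rw [← sum_mul, sum_neg_distrib, Real.negMulLog]
  rw [hsplit]
  refine sum_le_sum fun a ha => ?_
  rcases (hf a ha).eq_or_lt with hzero | hpos
  · simp [← hzero]
  · have hlog : Real.log (f a) ≤ Real.log (∑ b ∈ s, f b) :=
      Real.log_le_log hpos (single_le_sum hf ha)
    exact mul_le_mul_of_nonpos_left hlog (neg_nonpos.2 hpos.le)

variable [Fintype α] [Fintype β]

lemma ent_const_mul (c : ℝ) (f : α → ℝ) :
    ent (fun a => c * f a) = (∑ a, f a) * Real.negMulLog c + c * ent f := by
  simp only [ent, Real.negMulLog_mul, sum_add_distrib, sum_mul, mul_sum]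

lemma sum_mul_ent_div_sum {f : α → ℝ} (hf : ∀ a, 0 ≤ f a) :
    (∑ a, f a) * ent (fun a => f a / ∑ b, f b) = ent f - Real.negMulLog (∑ a, f a) := by
  by_cases hs : ∑ a, f a = 0
  · have hzero : ∀ a, f a = 0 := fun a =>
      (sum_eq_zero_iff_of_nonneg fun b _ => hf b).1 hs a (mem_univ a)
    simp [ent, hzero]
  · have hscale := ent_const_mul (∑ a, f a) fun a => f a / ∑ b, f b
    simp only [mul_div_cancel₀ _ hs, ← sum_div, div_self hs] at hscale
    linarith

lemma ent_prod (q : α × β → ℝ) : ent q = ∑ a, ent fun b => q (a, b) :=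
  Fintype.sum_prod_type _

lemma ent_fst_le {q : α × β → ℝ} (hq : ∀ t, 0 ≤ q t) : ent (fun a => ∑ b, q (a, b)) ≤ ent q := by
  rw [ent_prod]
  exact sum_le_sum fun a _ => negMulLog_sum_le univ fun b _ => hq (a, b)

lemma mutInfo_le_ent_snd {q : α × β → ℝ} (hq : ∀ t, 0 ≤ q t) :
    mutInfo q ≤ ent fun b => ∑ a, q (a, b) := by
  have hfst := ent_fst_le hq
  unfold mutInfo
  linarith

lemma condEntSnd_eq_sum_mul_ent {q : α × β → ℝ} (hq : ∀ t, 0 ≤ q t) :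
    condEntSnd q = ∑ a, (∑ b, q (a, b)) * ent fun b => q (a, b) / ∑ b', q (a, b') := by
  simp only [sum_mul_ent_div_sum fun b => hq (_, b), sum_sub_distrib, ← ent_prod]
  rfl

end Entropy

section PartialInformation

variable {X Y Z : Type*} [Fintype X] {p : X × Y × Z → ℝ}

lemma margYZ_nonneg (hp : ∀ t, 0 ≤ p t) (t : Y × Z) : 0 ≤ margYZ p t :=
  sum_nonneg fun _ _ => hp _

section YMarginal

variable [Fintype Z]

lemma sum_margYZ (p : X × Y × Z → ℝ) (y : Y) : ∑ z, margYZ p (y, z) = pY p y :=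
  sum_comm

lemma pY_nonneg (hp : ∀ t, 0 ≤ p t) (y : Y) : 0 ≤ pY p y :=
  sum_nonneg fun _ _ => sum_nonneg fun _ _ => hp _

lemma cy_nonneg (hp : ∀ t, 0 ≤ p t) (y : Y) (z : Z) : 0 ≤ cy p y z :=
  div_nonneg (margYZ_nonneg hp (y, z)) (pY_nonneg hp y)

end YMarginal

section ZMarginal

variable [Fintype Y]

lemma pZ_nonneg (hp : ∀ t, 0 ≤ p t) (z : Z) : 0 ≤ pZ p z :=
  sum_nonneg fun _ _ => sum_nonneg fun _ _ => hp _

lemma margYZ_le_pZ (hp : ∀ t, 0 ≤ p t) (y : Y) (z : Z) : margYZ p (y, z) ≤ pZ p z :=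
  sum_le_sum fun x _ => single_le_sum (fun y _ => hp (x, y, z)) (mem_univ y)

lemma doOp_nonneg (hp : ∀ t, 0 ≤ p t) {c : Z → ℝ} (hc : ∀ z, 0 ≤ c z) (t : X × Y × Z) :
    0 ≤ doOp p c t := by
  unfold doOp
  split_ifs with hz
  · exact div_nonneg (mul_nonneg (hp t) (hc _)) hz.le
  · exact le_rfl

lemma pZ_doOp (hp : ∀ t, 0 ≤ p t) {c : Z → ℝ} (hpc : ∀ z, pZ p z = 0 → c z = 0) :
    pZ (doOp p c) = c := by
  funext z
  change ∑ x, ∑ y, doOp p c (x, y, z) = c z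
  rcases (pZ_nonneg hp z).eq_or_lt with hz | hz
  · simp [doOp, ← hz, hpc z hz.symm]
  · calc ∑ x, ∑ y, doOp p c (x, y, z) = (∑ x, ∑ y, p (x, y, z)) * c z / pZ p z := by
          simp only [doOp, hz, if_true, ← sum_div, ← sum_mul]
      _ = c z := mul_div_cancel_left₀ _ hz.ne'

end ZMarginal

variable [Fintype Y] [Fintype Z]

lemma cy_eq_zero_of_pZ_eq_zero (hp : ∀ t, 0 ≤ p t) (y : Y) {z : Z} (hz : pZ p z = 0) :
    cy p y z = 0 := by
  have hyz : margYZ p (y, z) = 0 :=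
    le_antisymm (hz ▸ margYZ_le_pZ hp y z) (margYZ_nonneg hp (y, z))
  exact div_eq_zero_iff.2 (Or.inl hyz)

lemma mutInfo_margXZ_doOp_le (hp : ∀ t, 0 ≤ p t) {c : Z → ℝ} (hc : ∀ z, 0 ≤ c z)
    (hpc : ∀ z, pZ p z = 0 → c z = 0) : mutInfo (margXZ (doOp p c)) ≤ ent c :=
  calc mutInfo (margXZ (doOp p c))
      ≤ ent (pZ (doOp p c)) := mutInfo_le_ent_snd fun _ => sum_nonneg fun _ _ => doOp_nonneg hp hc _
    _ = ent c := by rw [pZ_doOp hp hpc]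

lemma condEntSnd_margYZ (hp : ∀ t, 0 ≤ p t) :
    condEntSnd (margYZ p) = ∑ y, pY p y * ent (cy p y) := by
  simp only [condEntSnd_eq_sum_mul_ent (margYZ_nonneg hp), sum_margYZ]
  rfl

lemma Un_le_condEntSnd (hp : ∀ t, 0 ≤ p t) : Un p ≤ condEntSnd (margYZ p) := by
  have hterm : ∀ y, mutInfo (margXZ (doy p y)) ≤ ent (cy p y) := fun y =>
    mutInfo_margXZ_doOp_le hp (cy_nonneg hp y) fun _ => cy_eq_zero_of_pZ_eq_zero hp y
  calc Un p ≤ ∑ y with 0 < pY p y, pY p y * ent (cy p y) :=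
        sum_le_sum fun y _ => mul_le_mul_of_nonneg_left (hterm y) (pY_nonneg hp y)
    _ = ∑ y, pY p y * ent (cy p y) :=
        sum_filter_of_ne fun y _ hy => (pY_nonneg hp y).lt_of_ne' (left_ne_zero_of_mul hy)
    _ = condEntSnd (margYZ p) := (condEntSnd_margYZ hp).symm

lemma condMI_eq_condEntSnd_sub (p : X × Y × Z → ℝ) :
    condMI p = condEntSnd (margYZ p) - (ent p - ent (margXY p)) := by
  simp only [condMI, condEntSnd, sum_margYZ]
  ring

end PartialInformation

theorem stmt8_general {X Y Z : Type*} [Fintype X] [Fintype Y] [Fintype Z]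
    (p : X × Y × Z → ℝ) (hp : ∀ t, 0 ≤ p t) :
    -(ent p - ent (margXY p)) ≤ Syn p := by
  rw [Syn, condMI_eq_condEntSnd_sub]
  linarith [Un_le_condEntSnd hp]

theorem stmt8 {X Y Z : Type*} [Fintype X] [Fintype Y] [Fintype Z]
    [Nonempty X] [Nonempty Y] [Nonempty Z]
    (p : X × Y × Z → ℝ) (hp0 : ∀ t, 0 ≤ p t) (hp1 : ∑ t, p t = 1)
    (hclosed : ent p - ent (margXY p) = 0) :
    0 ≤ Syn p := by
  simpa only [hclosed, neg_zero] using stmt8_general p hp0
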